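/- arXiv:1607.05889 — 4 statements merged into one kernel-verified Lean document; each statement's English description precedes it below -/
import Mathlib

section
/- For all j, k ∈ F_q, the identity P(j,k) = V(j)·V(k) holds (Katz's mixed character sum identity, valid for every odd prime power q with q ≡ 1 (mod 4)). -/
/-!
Write `q` for the size of the field, `φ = A₄ ^ 2`, and `Kl(b, c)` for the Kloosterman sum of
`ψ(b x + c / x)` over `x ≠ 0`.

Expanding `G(φ) φ(a / x - x)` as a Gauss sum turns the sum in `P(j,k)` into
`∑ φ(y) Kl(p - y, a(r + y))` with `p = (j + k)²`, `r = (j - k)²`. On the other side, since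
`A₄⁻¹ = φ A₄`, the symmetry of `V` under `A₄ ↦ A₄⁻¹` puts a weight `1 + φ(a x y)` on the double sum
`V(j) V(k)`; this weight counts the solutions of `y = a x t²`, and the product becomes
`∑ φ(z) Kl(a(z + j⁴ / z), z + k⁴ / z)`.

Up to a term `q` when `b = c = 0`, `Kl(b, c)` depends only on `b c`. With `i² = -1` and
`w = i(z - (jk)² / z)`, the second sum has `b c = a((j² + k²)² - w²)`, and
`∑ φ(u) f(u + 1 / u) = ∑ (φ(y + 2) + φ(y - 2)) f(y)` rewrites it as
`∑ φ(y + 2jk) Kl(1, a((j² + k²)² - y²))`, which is also the first sum after a shift of `y`. The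
degenerate terms `b = c = 0` match the delta terms of `P` and the exceptional value `V(0)`.
-/

open Finset

noncomputable section

variable {F : Type} [Field F] [Fintype F] [DecidableEq F]

/-- Katz's mixed character sum `P(j,k)`; the quadratic character `φ` is `A₄ ^ 2`. -/
def Pkatz (ψ : AddChar F ℂ) (A₄ : MulChar F ℂ) (a : F) (j k : F) : ℂ :=
  (if j = k then 1 else 0) + (A₄ ^ 2) (-1) * (if j = -k then 1 else 0) +
    (gaussSum (A₄ ^ 2) ψ)⁻¹ *
      ∑ x ∈ univ.filter (fun x : F => x ≠ 0),
        (A₄ ^ 2) (a / x - x) * ψ (x * (j + k) ^ 2 + (a / x) * (j - k) ^ 2)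

/-- Katz's sums `V(j)`. -/
def Vkatz (ψ : AddChar F ℂ) (A₄ : MulChar F ℂ) (a : F) (τ : ℂ) (j : F) : ℂ :=
  if j = 0 then gaussSum A₄ ψ / τ + τ / gaussSum A₄ ψ
  else τ⁻¹ * ∑ x ∈ univ.filter (fun x : F => x ≠ 0), A₄ x * ψ (x + a * j ^ 4 / x)

/-- The finite field hypergeometric function `₂F₁(A,B;C|x)`. -/
def hyp2F1 (A B C : MulChar F ℂ) (x : F) : ℂ :=
  ((1 : MulChar F ℂ) x / (Fintype.card F : ℂ)) *
    ∑ y : F, B y * (B⁻¹ * C) (y - 1) * A⁻¹ (1 - x * y)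

/-- The Jacobi sum `J(A,B)`. -/
def Jsum (A B : MulChar F ℂ) : ℂ := ∑ y : F, A y * B (1 - y)

/-- The sum `h(D,j)`; the quadratic character `φ` is `A₄ ^ 2`. -/
def hKatz (A₄ D : MulChar F ℂ) (j : F) : ℂ :=
  ∑ x ∈ univ.filter (fun x : F => x ≠ 0),
    D x * (A₄ ^ 2) (1 - x) * ((D⁻¹ ^ 2) * A₄ ^ 2) (x * (j + 1) ^ 2 + (j - 1) ^ 2)

/-- The sum `H(λ₁)`; the quadratic character `φ` is `A₄ ^ 2`. -/
def Hkatz (A₄ lam : MulChar F ℂ) (a : F) : ℂ :=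
  ∑ p ∈ (univ ×ˢ univ).filter
      (fun p : F × F => p.1 ≠ 0 ∧ p.2 ≠ 0 ∧
        p.2 * (p.1 + 1) ^ 2 + a * (p.1 - 1) ^ 2 / p.2 = 0),
    (lam ^ 2 * A₄ ^ 2) p.1 * (A₄ ^ 2) (p.2 - a / p.2)

/-- The Mellin transform `S(χ)` of the sums `V(j)`. -/
def Smel (ψ : AddChar F ℂ) (A₄ : MulChar F ℂ) (a : F) (τ : ℂ) (χ : MulChar F ℂ) : ℂ :=
  ∑ j ∈ univ.filter (fun j : F => j ≠ 0), χ j * Vkatz ψ A₄ a τ j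

/-- The Mellin transform `T(χ)` of the sums `P(j,0)`. -/
def Tmel (ψ : AddChar F ℂ) (A₄ : MulChar F ℂ) (a : F) (χ : MulChar F ℂ) : ℂ :=
  ∑ j ∈ univ.filter (fun j : F => j ≠ 0), χ j * Pkatz ψ A₄ a j 0

/-- The double Mellin transform `T(χ₁,χ₂)` of the sums `P(j,k)`. -/
def Tmel2 (ψ : AddChar F ℂ) (A₄ : MulChar F ℂ) (a : F) (χ₁ χ₂ : MulChar F ℂ) : ℂ :=
  ∑ j ∈ univ.filter (fun j : F => j ≠ 0), ∑ k ∈ univ.filter (fun k : F => k ≠ 0),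
    χ₁ j * χ₂ k * Pkatz ψ A₄ a j k

end

section QuadraticCharacters

variable {F R : Type*} [Field F] [CommRing R] {φ : MulChar F R}

lemma apply_sq_of_isQuadratic (hφ : φ.IsQuadratic) {t : F} (ht : t ≠ 0) : φ t ^ 2 = 1 := by
  rw [← MulChar.pow_apply' _ two_ne_zero, hφ.sq_eq_one, MulChar.one_apply ht.isUnit]

lemma apply_neg_one_of_isQuadratic (hφ : φ.IsQuadratic) {i : F} (hi : i ^ 2 = -1) : φ (-1) = 1 := by
  have hi₀ : i ≠ 0 := by rintro rfl; simp at hi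
  rw [← hi, map_pow, apply_sq_of_isQuadratic hφ hi₀]

lemma ringChar_ne_two_of_isQuadratic [Finite F] (hφ : φ.IsQuadratic) (hφ₁ : φ ≠ 1) :
    ringChar F ≠ 2 := by
  have := Fintype.ofFinite F
  refine fun hF ↦ hφ₁ (MulChar.ext fun u ↦ ?_)
  obtain ⟨t, ht⟩ := FiniteField.isSquare_of_char_two hF (u : F)
  have ht₀ : t ≠ 0 := by rintro rfl; simp at ht
  rw [ht, map_mul, ← pow_two, apply_sq_of_isQuadratic hφ ht₀, ← pow_two,
    MulChar.one_apply (pow_ne_zero 2 ht₀).isUnit]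

variable [Fintype F]

lemma eq_quadraticChar_of_isQuadratic [DecidableEq F] (hφ : φ.IsQuadratic) (hφ₁ : φ ≠ 1) :
    φ = (quadraticChar F).ringHomComp (Int.castRingHom R) := by
  have apply_sq {s : F} (hs : s ≠ 0) (h : IsSquare s) : φ s = 1 := by
    obtain ⟨t, rfl⟩ := h
    rw [map_mul, ← pow_two, apply_sq_of_isQuadratic hφ (left_ne_zero_of_mul hs)]
  obtain ⟨b, hb⟩ := MulChar.ne_one_iff.1 hφ₁
  have hb_sq : ¬IsSquare (b : F) := fun h ↦ hb (apply_sq b.ne_zero h)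
  have hb_neg : φ b = -1 := by
    rcases hφ b with h | h | h
    · exact absurd (h.trans (by simpa [h] using apply_sq_of_isQuadratic hφ b.ne_zero)) hb
    · exact absurd h hb
    · exact h
  refine MulChar.ext fun s ↦ ?_
  by_cases hs : IsSquare (s : F)
  · simp [apply_sq s.ne_zero hs, (quadraticChar_one_iff_isSquare s.ne_zero).2 hs]
  · have hsb : IsSquare ((s : F) * b) := by
      rw [← quadraticChar_one_iff_isSquare (mul_ne_zero s.ne_zero b.ne_zero), map_mul,
        quadraticChar_neg_one_iff_not_isSquare.2 hs,
        quadraticChar_neg_one_iff_not_isSquare.2 hb_sq, neg_one_mul, neg_neg]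
    have h := apply_sq (mul_ne_zero s.ne_zero b.ne_zero) hsb
    rw [map_mul, hb_neg, mul_neg_one] at h
    simp [quadraticChar_neg_one_iff_not_isSquare.2 hs, ← h]

lemma card_filter_sq_eq [DecidableEq F] (hφ : φ.IsQuadratic) (hφ₁ : φ ≠ 1) (s : F) :
    ((#{x : F | x ^ 2 = s} : ℕ) : R) = 1 + φ s := by
  have h := congrArg (Int.cast (R := R))
    (quadraticChar_card_sqrts (ringChar_ne_two_of_isQuadratic hφ hφ₁) s)
  rw [Set.toFinset_ofPred] at h
  rw [eq_quadraticChar_of_isQuadratic hφ hφ₁, MulChar.ringHomComp_apply, eq_intCast, add_comm]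
  exact_mod_cast h

lemma sum_comp_sq (hφ : φ.IsQuadratic) (hφ₁ : φ ≠ 1) (f : F → R) :
    ∑ x, f (x ^ 2) = ∑ s, (1 + φ s) * f s := by
  classical
  rw [← sum_fiberwise univ (fun x : F ↦ x ^ 2) (fun x ↦ f (x ^ 2))]
  refine sum_congr rfl fun s _ ↦ ?_
  rw [← card_filter_sq_eq hφ hφ₁, ← nsmul_eq_mul, ← sum_const]
  exact sum_congr rfl fun x hx ↦ by rw [(mem_filter.1 hx).2]

lemma sum_comp_mul_sq (hφ : φ.IsQuadratic) (hφ₁ : φ ≠ 1) {c : F} (hc : c ≠ 0) (f : F → R) :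
    ∑ x, f (c * x ^ 2) = ∑ y, (1 + φ (c * y)) * f y := by
  rw [sum_comp_sq hφ hφ₁ fun s ↦ f (c * s)]
  refine Fintype.sum_equiv (Equiv.mulLeft₀ c hc) _ _ fun s ↦ ?_
  rw [Equiv.mulLeft₀_apply, ← mul_assoc, ← pow_two, map_mul, map_pow, apply_sq_of_isQuadratic hφ hc,
    one_mul]

lemma sum_comp_add_inv (hφ : φ.IsQuadratic) (hφ₁ : φ ≠ 1) (f : F → R) :
    ∑ z, (1 : MulChar F R) z * f (z + z⁻¹) = ∑ y, (1 + φ (y ^ 2 - 4)) * f y := by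
  classical
  have h2 : (2 : F) ≠ 0 := Ring.two_ne_zero (ringChar_ne_two_of_isQuadratic hφ hφ₁)
  have graph (z : F) : (1 : MulChar F R) z * f (z + z⁻¹) =
      ∑ y, if z ^ 2 + 1 = y * z then f y else 0 := by
    rcases eq_or_ne z 0 with rfl | hz
    · simp [MulChar.map_zero]
    · have h (y : F) : z ^ 2 + 1 = y * z ↔ z + z⁻¹ = y := by
        rw [← mul_left_inj' (a := z + z⁻¹) hz, add_mul, inv_mul_cancel₀ hz, pow_two]
      simp [h, MulChar.one_apply hz.isUnit]
  have fibre (y : F) : ∑ z, (if z ^ 2 + 1 = y * z then f y else 0) =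
      (1 + φ (y ^ 2 - 4)) * f y := by
    calc ∑ z, (if z ^ 2 + 1 = y * z then f y else 0)
        = ∑ w : F, if w ^ 2 = y ^ 2 - 4 then f y else 0 := by
          refine Fintype.sum_equiv ((Equiv.mulLeft₀ 2 h2).trans (Equiv.subRight y)) _ _ fun z ↦ ?_
          simp only [Equiv.trans_apply, Equiv.mulLeft₀_apply, Equiv.subRight_apply]
          refine if_congr ⟨fun h ↦ by linear_combination 4 * h, fun h ↦ ?_⟩ rfl rfl
          exact mul_left_cancel₀ (mul_ne_zero h2 h2) (by linear_combination h)
      _ = (1 + φ (y ^ 2 - 4)) * f y := by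
          rw [sum_comp_sq hφ hφ₁ fun s ↦ if s = y ^ 2 - 4 then f y else 0]
          simp
  simp_rw [graph]
  rw [sum_comm]
  exact sum_congr rfl fun y _ ↦ fibre y

-- Evaluate `∑ f(t² + t⁻²)` in two ways: through `z = t²`, and through `u = t + t⁻¹` with
-- `t² + t⁻² = u² - 2`.
lemma sum_one_add_mul_comp_add_inv (hφ : φ.IsQuadratic) (hφ₁ : φ ≠ 1) (f : F → R) :
    ∑ z, (1 + φ z) * ((1 : MulChar F R) z * f (z + z⁻¹)) =
      ∑ y, (1 + φ (y + 2)) * (1 + φ (y - 2)) * f y := by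
  calc ∑ z, (1 + φ z) * ((1 : MulChar F R) z * f (z + z⁻¹))
      = ∑ t, (1 : MulChar F R) t * f ((t + t⁻¹) ^ 2 - 2) := by
        rw [← sum_comp_sq hφ hφ₁ fun s ↦ (1 : MulChar F R) s * f (s + s⁻¹)]
        refine sum_congr rfl fun t _ ↦ ?_
        rcases eq_or_ne t 0 with rfl | ht
        · simp [MulChar.map_zero]
        · rw [map_pow, MulChar.one_apply ht.isUnit, one_pow]
          congr 2
          field_simp
          ring
    _ = ∑ u, (1 + φ (u ^ 2 - 4)) * f (u ^ 2 - 2) :=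
        sum_comp_add_inv hφ hφ₁ fun u ↦ f (u ^ 2 - 2)
    _ = ∑ s, (1 + φ s) * ((1 + φ (s - 4)) * f (s - 2)) :=
        sum_comp_sq hφ hφ₁ fun s ↦ (1 + φ (s - 4)) * f (s - 2)
    _ = ∑ y, (1 + φ (y + 2)) * (1 + φ (y - 2)) * f y := by
        refine Fintype.sum_equiv (Equiv.subRight 2) _ _ fun s ↦ ?_
        rw [Equiv.subRight_apply, sub_add_cancel, sub_sub, mul_assoc]
        norm_num

lemma sum_mul_comp_add_inv (hφ : φ.IsQuadratic) (hφ₁ : φ ≠ 1) (f : F → R) :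
    ∑ z, φ z * f (z + z⁻¹) = ∑ y, (φ (y + 2) + φ (y - 2)) * f y := by
  have absorb (z : F) : φ z * (1 : MulChar F R) z = φ z := by rw [← MulChar.mul_apply, mul_one]
  have split : ∑ z, (1 + φ z) * ((1 : MulChar F R) z * f (z + z⁻¹)) =
      ∑ z, (1 : MulChar F R) z * f (z + z⁻¹) + ∑ z, φ z * f (z + z⁻¹) := by
    simp_rw [add_mul, one_mul, sum_add_distrib, ← mul_assoc, absorb]
  refine add_left_cancel (split.symm.trans ?_)
  rw [sum_one_add_mul_comp_add_inv hφ hφ₁, sum_comp_add_inv hφ hφ₁, ← sum_add_distrib]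
  refine sum_congr rfl fun y _ ↦ ?_
  rw [show y ^ 2 - 4 = (y + 2) * (y - 2) by ring, map_mul]
  ring

lemma sum_mul_comp_sub_sq_div (hφ : φ.IsQuadratic) (hφ₁ : φ ≠ 1) {i : F} (hi : i ^ 2 = -1) {n : F}
    (hn : n ≠ 0) {g : F → R} (hg : ∀ w, g (-w) = g w) :
    ∑ z, φ z * g (i * (z - n ^ 2 / z)) = 2 * φ i * ∑ y, φ (y + 2 * n) * g y := by
  have hi₀ : i ≠ 0 := by rintro rfl; simp at hi
  have reflect : ∑ y, φ (y - 2 * n) * g y = ∑ y, φ (y + 2 * n) * g y := by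
    refine Fintype.sum_equiv (Equiv.neg F) _ _ fun y ↦ ?_
    rw [Equiv.neg_apply, hg, ← one_mul (φ (y - 2 * n)), ← apply_neg_one_of_isQuadratic hφ hi,
      ← map_mul]
    ring_nf
  calc ∑ z, φ z * g (i * (z - n ^ 2 / z))
      = ∑ u, φ (i * n) * (φ u * g (n * (u + u⁻¹))) := by
        refine (Fintype.sum_equiv (Equiv.mulLeft₀ (i * n) (mul_ne_zero hi₀ hn)) _ _ fun u ↦ ?_).symm
        rw [Equiv.mulLeft₀_apply, map_mul φ (i * n), mul_assoc, ← hg]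
        rcases eq_or_ne u 0 with rfl | hu
        · simp [MulChar.map_zero]
        · congr 3
          field_simp
          linear_combination -u ^ 2 * hi
    _ = φ (i * n) * ∑ y, (φ (y + 2) + φ (y - 2)) * g (n * y) := by
        rw [← mul_sum, sum_mul_comp_add_inv hφ hφ₁ fun y ↦ g (n * y)]
    _ = φ i * ∑ y, (φ (y + 2 * n) + φ (y - 2 * n)) * g y := by
        rw [map_mul, mul_assoc, mul_sum]
        congr 1
        refine Fintype.sum_equiv (Equiv.mulLeft₀ n hn) _ _ fun y ↦ ?_
        rw [Equiv.mulLeft₀_apply, mul_comm 2 n, ← mul_add, ← mul_sub, map_mul, map_mul]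
        ring
    _ = 2 * φ i * ∑ y, φ (y + 2 * n) * g y := by
        simp_rw [add_mul, sum_add_distrib, reflect]
        ring

lemma sum_filter_sq_eq_sq [DecidableEq F] (hφ : φ.IsQuadratic) (hφ₁ : φ ≠ 1) (c : F) :
    ∑ z with z ^ 2 = c ^ 2, φ z = φ c + φ (-c) := by
  have h2 : (2 : F) ≠ 0 := Ring.two_ne_zero (ringChar_ne_two_of_isQuadratic hφ hφ₁)
  rcases eq_or_ne c 0 with rfl | hc
  · simp [MulChar.map_zero, filter_eq']
  · have hne : c ≠ -c := fun h ↦ mul_ne_zero h2 hc (by linear_combination h)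
    rw [← sum_pair hne]
    congr 1
    ext z
    simp [sq_eq_sq_iff_eq_or_eq_neg]

end QuadraticCharacters

section GaussSums

variable {F R : Type*} [Field F] [Fintype F] [CommRing R] [IsDomain R] {χ : MulChar F R}

lemma gaussSum_mulShift_of_ne_one (hχ : χ ≠ 1) (ψ : AddChar F R) (b : F) :
    gaussSum χ (ψ.mulShift b) = χ⁻¹ b * gaussSum χ ψ := by
  rcases eq_or_ne b 0 with rfl | hb
  · rw [AddChar.mulShift_zero, gaussSum_one_right hχ, MulChar.map_zero, zero_mul]
  · exact gaussSum_mulShift_eq χ ψ (Units.mk0 b hb)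

lemma gaussSum_mul_gaussSum_inv (hχ : χ ≠ 1) {ψ : AddChar F R} (hψ : ψ ≠ 1) :
    gaussSum χ ψ * gaussSum χ⁻¹ ψ = χ (-1) * Fintype.card F := by
  rw [← mul_gaussSum_inv_eq_gaussSum χ⁻¹, mul_left_comm,
    gaussSum_mul_gaussSum_eq_card hχ (.of_ne_one hψ), MulChar.inv_apply', inv_neg_one]

end GaussSums

section KloostermanSums

variable {F R : Type*} [Field F] [Fintype F] [CommRing R]

/-- The Kloosterman sum `∑ χ(x) ψ(a x + b / x)` twisted by `χ`; the ordinary Kloosterman sum is the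
case `χ = 1`. The term `x = 0`, where `b / x` has a junk value, vanishes since `χ 0 = 0`. -/
noncomputable def kloostermanSum (χ : MulChar F R) (ψ : AddChar F R) (a b : F) : R :=
  ∑ x, χ x * ψ (a * x + b / x)

lemma kloostermanSum_swap (χ : MulChar F R) (ψ : AddChar F R) (a b : F) :
    kloostermanSum χ ψ a b = kloostermanSum χ⁻¹ ψ b a := by
  refine Fintype.sum_equiv (Equiv.inv F) _ _ fun x ↦ ?_
  rw [Equiv.inv_apply, MulChar.inv_apply', inv_inv, div_inv_eq_mul, div_eq_mul_inv, add_comm]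

lemma kloostermanSum_mul_left (χ : MulChar F R) (ψ : AddChar F R) (a b : F) {c : F} (hc : c ≠ 0) :
    kloostermanSum χ ψ (c * a) b = χ⁻¹ c * kloostermanSum χ ψ a (c * b) := by
  rw [kloostermanSum, kloostermanSum, mul_sum]
  refine Fintype.sum_equiv (Equiv.mulLeft₀ c hc) _ _ fun x ↦ ?_
  rw [Equiv.mulLeft₀_apply, MulChar.inv_apply', ← mul_assoc, ← map_mul, inv_mul_cancel_left₀ hc,
    mul_div_mul_left _ _ hc, mul_left_comm, mul_assoc]

lemma kloostermanSum_zero_right (χ : MulChar F R) (ψ : AddChar F R) (a : F) :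
    kloostermanSum χ ψ a 0 = gaussSum χ (ψ.mulShift a) := by
  simp only [kloostermanSum, gaussSum, zero_div, add_zero, AddChar.mulShift_apply]

lemma kloostermanSum_one_right (χ : MulChar F R) (ψ : AddChar F R) {b : F} (hb : b ≠ 0) :
    kloostermanSum χ ψ 1 b = χ b * kloostermanSum χ⁻¹ ψ 1 b := by
  conv_lhs => rw [kloostermanSum_swap, ← mul_one b, kloostermanSum_mul_left _ _ _ _ hb, inv_inv,
    mul_one]

lemma kloostermanSum_one_mul_pow {χ : MulChar F R} {n : ℕ} (hχ : χ ^ n = 1) (ψ : AddChar F R)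
    {a t : F} (ha : a ≠ 0) (ht : t ≠ 0) :
    kloostermanSum χ ψ 1 (a * t ^ n) = χ a * kloostermanSum χ⁻¹ ψ 1 (a * t ^ n) := by
  lift t to Fˣ using ht.isUnit
  rw [kloostermanSum_one_right χ ψ (mul_ne_zero ha (pow_ne_zero n ht)), map_mul, map_pow,
    ← MulChar.pow_apply_coe, hχ, MulChar.one_apply_coe, mul_one]

lemma kloostermanSum_one_eq [DecidableEq F] [IsDomain R] {ψ : AddChar F R} (hψ : ψ ≠ 1) (a b : F) :
    kloostermanSum 1 ψ a b =
      kloostermanSum 1 ψ 1 (a * b) + if a = 0 ∧ b = 0 then (Fintype.card F : R) else 0 := by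
  have apply_zero {c : F} (hc : c ≠ 0) : kloostermanSum 1 ψ c 0 = -1 := by
    rw [← mul_one c, kloostermanSum_mul_left _ _ _ _ hc, mul_zero, kloostermanSum_zero_right,
      AddChar.mulShift_one, gaussSum_one_left hψ, inv_one, MulChar.one_apply hc.isUnit, one_mul]
  rcases eq_or_ne a 0 with rfl | ha
  · rw [zero_mul, apply_zero one_ne_zero]
    rcases eq_or_ne b 0 with rfl | hb
    · rw [kloostermanSum_zero_right, AddChar.mulShift_zero, gaussSum, if_pos ⟨rfl, rfl⟩]
      simp only [AddChar.one_apply, mul_one, MulChar.sum_one_eq_card_units, Fintype.card_units,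
        Nat.cast_pred Fintype.card_pos]
      ring
    · rw [kloostermanSum_swap, inv_one, apply_zero hb, if_neg (fun h ↦ hb h.2), add_zero]
  · rw [if_neg (fun h ↦ ha h.1), add_zero, ← mul_one a, kloostermanSum_mul_left _ _ _ _ ha, mul_one,
      inv_one, MulChar.one_apply ha.isUnit, one_mul]

lemma gaussSum_mul_sum_eq_sum_kloostermanSum [IsDomain R] {χ : MulChar F R} (hχ : χ ≠ 1)
    (ψ : AddChar F R) (a p r : F) :
    gaussSum χ ψ * ∑ x, χ⁻¹ (a / x - x) * ψ (x * p + a / x * r) =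
      ∑ y, χ y * kloostermanSum 1 ψ (p - y) (a * (r + y)) := by
  simp_rw [kloostermanSum, mul_sum]
  rw [sum_comm]
  refine sum_congr rfl fun x _ ↦ ?_
  rcases eq_or_ne x 0 with rfl | hx
  · simp [MulChar.map_zero]
  rw [← mul_assoc, mul_comm (gaussSum χ ψ), ← gaussSum_mulShift_of_ne_one hχ, gaussSum, sum_mul]
  refine sum_congr rfl fun y _ ↦ ?_
  rw [MulChar.one_apply hx.isUnit, one_mul, AddChar.mulShift_apply, mul_assoc,
    ← AddChar.map_add_eq_mul]
  congr 2
  ring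

lemma sum_mul_kloostermanSum_sub_add [DecidableEq F] [IsDomain R] (φ : MulChar F R)
    {ψ : AddChar F R} (hψ : ψ ≠ 1) {a : F} (ha : a ≠ 0) (p r : F) :
    ∑ y, φ y * kloostermanSum 1 ψ (p - y) (a * (r + y)) =
      ∑ y, φ y * kloostermanSum 1 ψ 1 (a * ((p - y) * (r + y))) +
        if p + r = 0 then φ p * Fintype.card F else 0 := by
  have degenerate (y : F) : p - y = 0 ∧ a * (r + y) = 0 ↔ y = p ∧ p + r = 0 := by
    rw [mul_eq_zero_iff_left ha, sub_eq_zero, eq_comm, add_comm r]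
    exact and_congr_right fun h ↦ by rw [h]
  simp_rw [kloostermanSum_one_eq hψ (p - _), degenerate, mul_add, sum_add_distrib, ite_and,
    mul_ite, mul_zero, sum_ite_eq', mem_univ, if_true, mul_left_comm a]

lemma sum_sum_mul_eq_sum_kloostermanSum (φ : MulChar F R) (ψ : AddChar F R) (a β γ : F) :
    ∑ x, ∑ t, φ (x * t) * ψ (x + a * β / x + (a * x * t ^ 2 + γ / (x * t ^ 2))) =
      ∑ z, φ z * kloostermanSum 1 ψ (a * (z + β / z)) (z + γ / z) := by
  simp_rw [kloostermanSum, mul_sum]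
  rw [sum_comm, sum_comm (s := (univ : Finset F)) (t := univ) (f := fun z t ↦
    φ z * ((1 : MulChar F R) t * ψ (a * (z + β / z) * t + (z + γ / z) / t)))]
  refine sum_congr rfl fun t _ ↦ ?_
  rcases eq_or_ne t 0 with rfl | ht
  · simp [MulChar.map_zero]
  refine Fintype.sum_equiv (Equiv.mulRight₀ t ht) _ _ fun x ↦ ?_
  rw [Equiv.mulRight₀_apply, MulChar.one_apply ht.isUnit, one_mul]
  rcases eq_or_ne x 0 with rfl | hx
  · simp [MulChar.map_zero]
  congr 2
  field_simp
  ring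

lemma kloostermanSum_mul_add_inv_mul {χ : MulChar F R} (hφ : (χ ^ 2).IsQuadratic)
    (ψ : AddChar F R) (a β γ : F) :
    kloostermanSum χ ψ 1 β * kloostermanSum χ ψ 1 γ +
        χ a ^ 2 * (kloostermanSum χ⁻¹ ψ 1 β * kloostermanSum χ⁻¹ ψ 1 γ) =
      ∑ x, ∑ y, (1 + (χ ^ 2) (a * x * y)) * (χ (x * y) * ψ (x + β / x + (y + γ / y))) := by
  have inv_apply (u : F) : χ⁻¹ u = (χ ^ 2) u * χ u := by
    rw [← MulChar.mul_apply]
    congr 1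
    rw [inv_eq_iff_mul_eq_one, ← hφ.sq_eq_one]
    group
  simp_rw [kloostermanSum, sum_mul_sum, mul_sum, ← sum_add_distrib]
  refine sum_congr rfl fun x _ ↦ sum_congr rfl fun y _ ↦ ?_
  rw [inv_apply, inv_apply, map_mul, map_mul, map_mul, MulChar.pow_apply' χ two_ne_zero a, one_mul,
    one_mul, AddChar.map_add_eq_mul ψ (_ + _)]
  ring

lemma kloostermanSum_mul_add_inv_mul_eq_sum {χ : MulChar F R} (hφ : (χ ^ 2).IsQuadratic)
    (hφ₁ : χ ^ 2 ≠ 1) (ψ : AddChar F R) {a : F} (ha : a ≠ 0) (β γ : F) :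
    kloostermanSum χ ψ 1 (a * β) * kloostermanSum χ ψ 1 (a * γ) +
        χ a ^ 2 * (kloostermanSum χ⁻¹ ψ 1 (a * β) * kloostermanSum χ⁻¹ ψ 1 (a * γ)) =
      χ a * ∑ z, (χ ^ 2) z * kloostermanSum 1 ψ (a * (z + β / z)) (z + γ / z) := by
  rw [kloostermanSum_mul_add_inv_mul hφ, ← sum_sum_mul_eq_sum_kloostermanSum, mul_sum]
  refine sum_congr rfl fun x _ ↦ ?_
  rcases eq_or_ne x 0 with rfl | hx
  · simp [MulChar.map_zero]
  rw [← sum_comp_mul_sq hφ hφ₁ (mul_ne_zero ha hx), mul_sum]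
  refine sum_congr rfl fun t _ ↦ ?_
  have hχ : χ (x * (a * x * t ^ 2)) = χ a * (χ ^ 2) (x * t) := by
    rw [MulChar.pow_apply' χ two_ne_zero, ← map_pow, ← map_mul]
    congr 1
    ring
  rw [hχ, mul_assoc, mul_assoc a x, mul_div_mul_left _ _ ha]

end KloostermanSums

section KatzSums

variable {F R : Type*} [Field F] [Fintype F] [CommRing R]

/-- The `φ`-weighted sum `∑ φ(y + 2jk) Kl(a((j² + k²)² - y²))` of ordinary Kloosterman sums
`Kl(c) = kloostermanSum 1 ψ 1 c`, the common nondegenerate part of `q P(j,k)` and `q V(j) V(k)`. -/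
noncomputable def katzKloostermanSum (φ : MulChar F R) (ψ : AddChar F R) (a j k : F) : R :=
  ∑ y, φ (y + 2 * (j * k)) * kloostermanSum 1 ψ 1 (a * ((j ^ 2 + k ^ 2) ^ 2 - y ^ 2))

lemma katzKloostermanSum_comm (φ : MulChar F R) (ψ : AddChar F R) (a j k : F) :
    katzKloostermanSum φ ψ a j k = katzKloostermanSum φ ψ a k j := by
  simp only [katzKloostermanSum, mul_comm j k, add_comm (j ^ 2)]

variable {φ : MulChar F R} {ψ : AddChar F R} {a i j k : F}

lemma sum_mul_kloostermanSum_of_mul_eq_zero [IsDomain R] (hφ : φ.IsQuadratic) (hψ : ψ ≠ 1)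
    (ha : a ≠ 0) (hi : i ^ 2 = -1) (hjk : j * k = 0) :
    ∑ z, φ z * kloostermanSum 1 ψ (a * (z + j ^ 4 / z)) (z + k ^ 4 / z) =
      φ i * katzKloostermanSum φ ψ a j k := by
  classical
  have hi₀ : i ≠ 0 := by rintro rfl; simp at hi
  rw [katzKloostermanSum, mul_sum]
  refine Fintype.sum_equiv (Equiv.mulLeft₀ i hi₀) _ _ fun z ↦ ?_
  rcases eq_or_ne z 0 with rfl | hz
  · simp [hjk, MulChar.map_zero]
  have nondegenerate : ¬(a * (z + j ^ 4 / z) = 0 ∧ z + k ^ 4 / z = 0) := by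
    rintro ⟨h₁, h₂⟩
    rcases mul_eq_zero.1 hjk with rfl | rfl <;> simp_all
  rw [kloostermanSum_one_eq hψ, if_neg nondegenerate, add_zero, Equiv.mulLeft₀_apply, hjk, mul_zero,
    add_zero, map_mul, ← mul_assoc, ← mul_assoc, ← pow_two, apply_sq_of_isQuadratic hφ hi₀, one_mul]
  congr 2
  field_simp
  linear_combination (j ^ 3 * k ^ 3 - 2 * j * k * z ^ 2) * hjk + z ^ 4 * hi

variable [DecidableEq F]

lemma sum_mul_ite_add_div_eq_zero (hφ : φ.IsQuadratic) (hφ₁ : φ ≠ 1) (hi : i ^ 2 = -1)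
    (hk : k ≠ 0) :
    ∑ z, φ z * (if z + j ^ 4 / z = 0 ∧ z + k ^ 4 / z = 0 then (Fintype.card F : R) else 0) =
      2 * φ i * if j ^ 4 = k ^ 4 then (Fintype.card F : R) else 0 := by
  have sum_roots : ∑ z with z ^ 2 = (i * k ^ 2) ^ 2, φ z = 2 * φ i := by
    rw [sum_filter_sq_eq_sq hφ hφ₁, ← neg_one_mul, map_mul φ (-1),
      apply_neg_one_of_isQuadratic hφ hi, one_mul, map_mul, map_pow, apply_sq_of_isQuadratic hφ hk]
    ring
  rw [← sum_roots, sum_mul, sum_filter]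
  refine sum_congr rfl fun z _ ↦ ?_
  rcases eq_or_ne z 0 with rfl | hz
  · simp [MulChar.map_zero]
  have root_iff (w : F) : z + w ^ 4 / z = 0 ↔ z ^ 2 = -w ^ 4 := by
    rw [← mul_eq_zero_iff_right hz, add_mul, div_mul_cancel₀ _ hz, ← pow_two,
      add_eq_zero_iff_eq_neg]
  have hc : (i * k ^ 2) ^ 2 = -k ^ 4 := by linear_combination k ^ 4 * hi
  simp only [root_iff, hc]
  by_cases h : z ^ 2 = -k ^ 4
  · simp [h, eq_comm]
  · simp [h]

lemma sum_mul_kloostermanSum_of_mul_ne_zero [IsDomain R] (hφ : φ.IsQuadratic) (hφ₁ : φ ≠ 1)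
    (hψ : ψ ≠ 1) (ha : a ≠ 0) (hi : i ^ 2 = -1) (hj : j ≠ 0) (hk : k ≠ 0) :
    ∑ z, φ z * kloostermanSum 1 ψ (a * (z + j ^ 4 / z)) (z + k ^ 4 / z) =
      2 * φ i * (katzKloostermanSum φ ψ a j k +
        if j ^ 4 = k ^ 4 then (Fintype.card F : R) else 0) := by
  have even : ∀ w : F, kloostermanSum 1 ψ 1 (a * ((j ^ 2 + k ^ 2) ^ 2 - (-w) ^ 2)) =
      kloostermanSum 1 ψ 1 (a * ((j ^ 2 + k ^ 2) ^ 2 - w ^ 2)) := fun w ↦ by rw [neg_sq]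
  rw [mul_add, katzKloostermanSum,
    ← sum_mul_comp_sub_sq_div hφ hφ₁ hi (mul_ne_zero hj hk) even,
    ← sum_mul_ite_add_div_eq_zero hφ hφ₁ hi hk, ← sum_add_distrib]
  refine sum_congr rfl fun z _ ↦ ?_
  rcases eq_or_ne z 0 with rfl | hz
  · simp [MulChar.map_zero]
  rw [kloostermanSum_one_eq hψ, mul_add]
  simp only [mul_eq_zero_iff_left ha]
  congr 3
  field_simp
  linear_combination (z ^ 2 - (j * k) ^ 2) ^ 2 * hi

end KatzSums

section KatzIdentity

variable {F : Type} [Field F] [Fintype F] {ψ : AddChar F ℂ} {χ : MulChar F ℂ} {a i j k : F} {τ : ℂ}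

lemma ne_zero_of_sq_eq_card_mul (hτ : τ ^ 2 = Fintype.card F * χ (-a)) (ha : a ≠ 0) : τ ≠ 0 := by
  rintro rfl
  simp [eq_comm (a := (0 : ℂ)), (ha.isUnit.neg.map χ).ne_zero] at hτ

lemma card_mul_eq_of_sq_mul_eq (hτ : τ ^ 2 = Fintype.card F * χ (-a)) (ha : a ≠ 0)
    (hi : i ^ 2 = -1) {x y : ℂ} (h : τ ^ 2 * x = χ a * (χ ^ 2) i * y) :
    Fintype.card F * x = y := by
  have hi₀ : i ≠ 0 := by rintro rfl; simp at hi
  have hτ' : τ ^ 2 = Fintype.card F * (χ a * (χ ^ 2) i) := by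
    rw [hτ, ← neg_one_mul, ← hi, map_mul, map_pow, MulChar.pow_apply' χ two_ne_zero, mul_comm (χ a)]
  have factor_ne_zero : χ a * (χ ^ 2) i ≠ 0 :=
    mul_ne_zero (ha.isUnit.map χ).ne_zero (hi₀.isUnit.map (χ ^ 2)).ne_zero
  refine mul_left_cancel₀ factor_ne_zero ?_
  linear_combination h - x * hτ'

variable [DecidableEq F]

lemma card_mul_Pkatz (hφ : (χ ^ 2).IsQuadratic) (hφ₁ : χ ^ 2 ≠ 1) (hψ : ψ ≠ 1) (ha : a ≠ 0)
    (hi : i ^ 2 = -1) (j k : F) :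
    Fintype.card F * Pkatz ψ χ a j k = katzKloostermanSum (χ ^ 2) ψ a j k +
      Fintype.card F * ((if j = k then 1 else 0) + (if j = -k then 1 else 0) +
        if (j + k) ^ 2 + (j - k) ^ 2 = 0 then (χ ^ 2) ((j + k) ^ 2) else 0) := by
  have gauss_sq : gaussSum (χ ^ 2) ψ * gaussSum (χ ^ 2) ψ = Fintype.card F := by
    simpa only [hφ.inv, apply_neg_one_of_isQuadratic hφ hi, one_mul] using
      gaussSum_mul_gaussSum_inv hφ₁ hψ
  have gauss_ne_zero : gaussSum (χ ^ 2) ψ ≠ 0 := fun h ↦ by simp [h, eq_comm] at gauss_sq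
  have shift : ∑ y, (χ ^ 2) y *
      kloostermanSum 1 ψ 1 (a * (((j + k) ^ 2 - y) * ((j - k) ^ 2 + y))) =
      katzKloostermanSum (χ ^ 2) ψ a j k := by
    refine Fintype.sum_equiv (Equiv.subRight (2 * (j * k))) _ _ fun y ↦ ?_
    rw [Equiv.subRight_apply, sub_add_cancel]
    congr 3
    ring
  have expand := gaussSum_mul_sum_eq_sum_kloostermanSum hφ₁ ψ a ((j + k) ^ 2) ((j - k) ^ 2)
  rw [hφ.inv, sum_mul_kloostermanSum_sub_add _ hψ ha, shift] at expand
  rw [Pkatz, apply_neg_one_of_isQuadratic hφ hi, one_mul, sum_filter_of_ne, mul_add, ← gauss_sq,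
    mul_assoc _ _ (_⁻¹ * _), mul_inv_cancel_left₀ gauss_ne_zero, expand, gauss_sq]
  · split_ifs <;> ring
  · rintro x - hx rfl
    simp [MulChar.map_zero] at hx

lemma card_mul_Pkatz_of_ne_zero (hφ : (χ ^ 2).IsQuadratic) (hφ₁ : χ ^ 2 ≠ 1) (hψ : ψ ≠ 1)
    (ha : a ≠ 0) (hi : i ^ 2 = -1) (hj : j ≠ 0) (hk : k ≠ 0) :
    Fintype.card F * Pkatz ψ χ a j k = katzKloostermanSum (χ ^ 2) ψ a j k +
      if j ^ 4 = k ^ 4 then (Fintype.card F : ℂ) else 0 := by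
  have h2 : (2 : F) ≠ 0 := Ring.two_ne_zero (ringChar_ne_two_of_isQuadratic hφ hφ₁)
  have pow_four_eq_iff : j ^ 4 = k ^ 4 ↔ j = k ∨ j = -k ∨ (j + k) ^ 2 + (j - k) ^ 2 = 0 := by
    rw [← sub_eq_zero, show j ^ 4 - k ^ 4 = (j - k) * ((j + k) * (j ^ 2 + k ^ 2)) by ring,
      show (j + k) ^ 2 + (j - k) ^ 2 = 2 * (j ^ 2 + k ^ 2) by ring]
    simp only [mul_eq_zero, h2, false_or, sub_eq_zero, add_eq_zero_iff_eq_neg]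
  rw [card_mul_Pkatz hφ hφ₁ hψ ha hi]
  congr 1
  by_cases h₁ : j = k
  · subst h₁
    have h : j ≠ -j := fun h ↦ mul_ne_zero h2 hj (by linear_combination h)
    simp [h, h2, hj, ← two_mul]
  by_cases h₂ : j = -k
  · subst h₂
    have h : -k - k ≠ 0 := fun h ↦ mul_ne_zero h2 hk (by linear_combination -h)
    simp [h₁, h, show (-k) ^ 4 = k ^ 4 by ring]
  have hjk : j + k ≠ 0 := fun h ↦ h₂ (eq_neg_of_add_eq_zero_left h)
  simp [pow_four_eq_iff, h₁, h₂, apply_sq_of_isQuadratic hφ hjk]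

lemma card_mul_Pkatz_zero_left (hφ : (χ ^ 2).IsQuadratic) (hφ₁ : χ ^ 2 ≠ 1) (hψ : ψ ≠ 1)
    (ha : a ≠ 0) (hi : i ^ 2 = -1) (hk : k ≠ 0) :
    Fintype.card F * Pkatz ψ χ a 0 k = katzKloostermanSum (χ ^ 2) ψ a 0 k := by
  have h2 : (2 : F) ≠ 0 := Ring.two_ne_zero (ringChar_ne_two_of_isQuadratic hφ hφ₁)
  rw [card_mul_Pkatz hφ hφ₁ hψ ha hi]
  simp [hk, hk.symm, ← two_mul, h2]

lemma card_mul_Pkatz_zero_zero (hφ : (χ ^ 2).IsQuadratic) (hφ₁ : χ ^ 2 ≠ 1) (hψ : ψ ≠ 1)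
    (ha : a ≠ 0) (hi : i ^ 2 = -1) :
    Fintype.card F * Pkatz ψ χ a 0 0 =
      katzKloostermanSum (χ ^ 2) ψ a 0 0 + 2 * Fintype.card F := by
  rw [card_mul_Pkatz hφ hφ₁ hψ ha hi]
  simp only [neg_zero, if_true, add_zero, sub_zero, zero_pow two_ne_zero, MulChar.map_zero]
  ring

lemma Pkatz_comm (hφ : (χ ^ 2).IsQuadratic) (hφ₁ : χ ^ 2 ≠ 1) (hψ : ψ ≠ 1) (ha : a ≠ 0)
    (hi : i ^ 2 = -1) (j k : F) : Pkatz ψ χ a j k = Pkatz ψ χ a k j := by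
  have hq : (Fintype.card F : ℂ) ≠ 0 := Nat.cast_ne_zero.2 Fintype.card_ne_zero
  refine mul_left_cancel₀ hq ?_
  rw [card_mul_Pkatz hφ hφ₁ hψ ha hi, card_mul_Pkatz hφ hφ₁ hψ ha hi, katzKloostermanSum_comm,
    add_comm k, ← neg_sub k, neg_sq]
  simp only [eq_comm (a := j) (b := k), eq_neg_iff_add_eq_zero, add_comm j]

lemma mul_Vkatz_of_ne_zero (hτ₀ : τ ≠ 0) (hj : j ≠ 0) :
    τ * Vkatz ψ χ a τ j = kloostermanSum χ ψ 1 (a * j ^ 4) := by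
  rw [Vkatz, if_neg hj, mul_inv_cancel_left₀ hτ₀, sum_filter_of_ne, kloostermanSum]
  · simp_rw [one_mul]
  · rintro x - hx rfl
    simp [MulChar.map_zero] at hx

lemma mul_Vkatz_zero (hχ : χ ≠ 1) (hψ : ψ ≠ 1) (hτ : τ ^ 2 = Fintype.card F * χ (-a))
    (hτ₀ : τ ≠ 0) :
    τ * Vkatz ψ χ a τ 0 = kloostermanSum χ ψ 1 0 + χ a * kloostermanSum χ⁻¹ ψ 1 0 := by
  have gauss_mul := gaussSum_mul_gaussSum_inv hχ hψ
  have gauss_ne_zero : gaussSum χ ψ ≠ 0 := fun h ↦ by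
    simp [h, eq_comm (a := (0 : ℂ)), (isUnit_one.neg.map χ).ne_zero] at gauss_mul
  have hτ' : τ ^ 2 = χ a * (gaussSum χ ψ * gaussSum χ⁻¹ ψ) := by
    rw [hτ, gauss_mul, ← neg_one_mul, map_mul]
    ring
  rw [Vkatz, if_pos rfl, kloostermanSum_zero_right, kloostermanSum_zero_right, AddChar.mulShift_one]
  field_simp
  linear_combination hτ'

lemma card_mul_Vkatz_mul_Vkatz_of_ne_zero (hφ : (χ ^ 2).IsQuadratic) (hφ₁ : χ ^ 2 ≠ 1)
    (hψ : ψ ≠ 1) (ha : a ≠ 0) (hi : i ^ 2 = -1) (hτ : τ ^ 2 = Fintype.card F * χ (-a))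
    (hj : j ≠ 0) (hk : k ≠ 0) :
    Fintype.card F * (Vkatz ψ χ a τ j * Vkatz ψ χ a τ k) = katzKloostermanSum (χ ^ 2) ψ a j k +
      if j ^ 4 = k ^ 4 then (Fintype.card F : ℂ) else 0 := by
  have hτ₀ := ne_zero_of_sq_eq_card_mul hτ ha
  have h4 : χ ^ 4 = 1 := by rw [pow_mul χ 2 2, hφ.sq_eq_one]
  have prod := kloostermanSum_mul_add_inv_mul_eq_sum hφ hφ₁ ψ ha (j ^ 4) (k ^ 4)
  rw [sum_mul_kloostermanSum_of_mul_ne_zero hφ hφ₁ hψ ha hi hj hk, pow_two, mul_mul_mul_comm,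
    ← kloostermanSum_one_mul_pow h4 ψ ha hj, ← kloostermanSum_one_mul_pow h4 ψ ha hk,
    ← mul_Vkatz_of_ne_zero hτ₀ hj, ← mul_Vkatz_of_ne_zero hτ₀ hk] at prod
  refine card_mul_eq_of_sq_mul_eq hτ ha hi ?_
  linear_combination prod / 2

lemma card_mul_Vkatz_zero_mul_Vkatz (hφ : (χ ^ 2).IsQuadratic) (hφ₁ : χ ^ 2 ≠ 1)
    (hψ : ψ ≠ 1) (ha : a ≠ 0) (hi : i ^ 2 = -1) (hτ : τ ^ 2 = Fintype.card F * χ (-a))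
    (hk : k ≠ 0) :
    Fintype.card F * (Vkatz ψ χ a τ 0 * Vkatz ψ χ a τ k) =
      katzKloostermanSum (χ ^ 2) ψ a 0 k := by
  have hτ₀ := ne_zero_of_sq_eq_card_mul hτ ha
  have hχ : χ ≠ 1 := by rintro rfl; exact hφ₁ (one_pow 2)
  have h4 : χ ^ 4 = 1 := by rw [pow_mul χ 2 2, hφ.sq_eq_one]
  have prod := kloostermanSum_mul_add_inv_mul_eq_sum hφ hφ₁ ψ ha (0 ^ 4) (k ^ 4)
  rw [sum_mul_kloostermanSum_of_mul_eq_zero hφ hψ ha hi (zero_mul k), pow_two, mul_mul_mul_comm,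
    ← kloostermanSum_one_mul_pow h4 ψ ha hk, ← mul_Vkatz_of_ne_zero hτ₀ hk, ← add_mul,
    zero_pow four_ne_zero, mul_zero, ← mul_Vkatz_zero hχ hψ hτ hτ₀] at prod
  refine card_mul_eq_of_sq_mul_eq hτ ha hi ?_
  linear_combination prod

lemma card_mul_Vkatz_zero_mul_Vkatz_zero (hφ : (χ ^ 2).IsQuadratic) (hφ₁ : χ ^ 2 ≠ 1)
    (hψ : ψ ≠ 1) (ha : a ≠ 0) (hi : i ^ 2 = -1) (hτ : τ ^ 2 = Fintype.card F * χ (-a)) :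
    Fintype.card F * (Vkatz ψ χ a τ 0 * Vkatz ψ χ a τ 0) =
      katzKloostermanSum (χ ^ 2) ψ a 0 0 + 2 * Fintype.card F := by
  have hχ : χ ≠ 1 := by rintro rfl; exact hφ₁ (one_pow 2)
  have gauss_mul : kloostermanSum χ ψ 1 0 * kloostermanSum χ⁻¹ ψ 1 0 =
      (χ ^ 2) i * Fintype.card F := by
    rw [kloostermanSum_zero_right, kloostermanSum_zero_right, AddChar.mulShift_one,
      gaussSum_mul_gaussSum_inv hχ hψ, ← hi, map_pow, MulChar.pow_apply' χ two_ne_zero]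
  have prod := kloostermanSum_mul_add_inv_mul_eq_sum hφ hφ₁ ψ ha (0 ^ 4) (0 ^ 4)
  rw [sum_mul_kloostermanSum_of_mul_eq_zero hφ hψ ha hi (zero_mul 0), zero_pow four_ne_zero,
    mul_zero] at prod
  refine card_mul_eq_of_sq_mul_eq hτ ha hi ?_
  rw [← pow_two, ← mul_pow, mul_Vkatz_zero hχ hψ hτ (ne_zero_of_sq_eq_card_mul hτ ha)]
  linear_combination prod + 2 * χ a * gauss_mul

end KatzIdentity

/-- Katz's mixed character sum identity `P(j,k) = V(j)·V(k)` for `q ≡ 1 (mod 4)`. -/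
theorem katz_identity
    (F : Type) [Field F] [Fintype F] [DecidableEq F]
    (hq : Fintype.card F % 4 = 1)
    (ψ : AddChar F ℂ) (hψ : ψ ≠ 1)
    (A₄ : MulChar F ℂ) (hA₄ : orderOf A₄ = 4)
    (a : F) (ha : a ≠ 0)
    (τ : ℂ) (hτ : τ ^ 2 = (Fintype.card F : ℂ) * A₄ (-a)) :
    ∀ j k : F, Pkatz ψ A₄ a j k = Vkatz ψ A₄ a τ j * Vkatz ψ A₄ a τ k := by
  obtain ⟨i, hi⟩ : ∃ i : F, i ^ 2 = -1 := by
    obtain ⟨i, hi⟩ := FiniteField.isSquare_neg_one_iff.2 (by omega : Fintype.card F % 4 ≠ 3)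
    exact ⟨i, by rw [hi, pow_two]⟩
  have hφ : (A₄ ^ 2).IsQuadratic := by
    rw [MulChar.isQuadratic_iff_sq_eq_one, ← pow_mul, ← orderOf_dvd_iff_pow_eq_one, hA₄]
  have hφ₁ : A₄ ^ 2 ≠ 1 := pow_ne_one_of_lt_orderOf two_ne_zero (by omega)
  have hq₀ : (Fintype.card F : ℂ) ≠ 0 := Nat.cast_ne_zero.2 Fintype.card_ne_zero
  intro j k
  refine mul_left_cancel₀ hq₀ ?_
  rcases eq_or_ne j 0 with rfl | hj <;> rcases eq_or_ne k 0 with rfl | hk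
  · rw [card_mul_Pkatz_zero_zero hφ hφ₁ hψ ha hi,
      card_mul_Vkatz_zero_mul_Vkatz_zero hφ hφ₁ hψ ha hi hτ]
  · rw [card_mul_Pkatz_zero_left hφ hφ₁ hψ ha hi hk,
      card_mul_Vkatz_zero_mul_Vkatz hφ hφ₁ hψ ha hi hτ hk]
  · rw [Pkatz_comm hφ hφ₁ hψ ha hi, mul_comm (Vkatz ψ A₄ a τ j),
      card_mul_Pkatz_zero_left hφ hφ₁ hψ ha hi hj,
      card_mul_Vkatz_zero_mul_Vkatz hφ hφ₁ hψ ha hi hτ hj]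
  · rw [card_mul_Pkatz_of_ne_zero hφ hφ₁ hψ ha hi hj hk,
      card_mul_Vkatz_mul_Vkatz_of_ne_zero hφ hφ₁ hψ ha hi hτ hj hk]
end

section
/- If the multiplicative character χ of F_q is not a fourth power (i.e., there is no multiplicative character ν with χ = ν⁴), then S(χ) = 0. -/
/-!
Under the duality between subgroups of `Fˣ` and of its character group, the annihilator of the
group of `n`-th powers of characters is the `n`-torsion of `Fˣ`, since characters separate points.
So a character `χ` that is not a fourth power satisfies `χ u ≠ 1` for some `u` with `u ^ 4 = 1`.
As `V(j)` depends only on `j ^ 4` for `j ≠ 0`, substituting `u j` for `j` gives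
`S(χ) = χ(u) S(χ)`, whence `S(χ) = 0`.
-/

open Finset

section MulCharPow

variable {M R : Type*} [CommMonoid M] [CommRing R]

theorem forall_mulChar_apply_eq_one_iff [Finite M] [Nontrivial R]
    [HasEnoughRootsOfUnity R (Monoid.exponent Mˣ)] {u : Mˣ} :
    (∀ χ : MulChar M R, χ u = 1) ↔ u = 1 := by
  refine ⟨fun h ↦ ?_, fun h χ ↦ by rw [h, Units.val_one, map_one]⟩
  by_contra hu
  obtain ⟨χ, hχ⟩ :=
    MulChar.exists_apply_ne_one_of_hasEnoughRootsOfUnity M R (Units.val_eq_one.not.2 hu)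
  exact hχ (h χ)

theorem subgroupOrderIsoSubgroupMulChar_ker_powMonoidHom [Finite M] [Nontrivial R]
    [HasEnoughRootsOfUnity R (Monoid.exponent Mˣ)] (n : ℕ) :
    MulChar.subgroupOrderIsoSubgroupMulChar M R (powMonoidHom n).ker =
      OrderDual.toDual (powMonoidHom n).range := by
  rw [← OrderIso.eq_symm_apply]
  ext u
  calc u ∈ (powMonoidHom n).ker
    _ ↔ ∀ ν : MulChar M R, ν (u ^ n : Mˣ) = 1 := forall_mulChar_apply_eq_one_iff.symm
    _ ↔ ∀ ν : MulChar M R, (ν ^ n) u = 1 := by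
      simp only [MulChar.pow_apply_coe, Units.val_pow_eq_pow_val, map_pow]
    _ ↔ u ∈ (MulChar.subgroupOrderIsoSubgroupMulChar M R).symm
          (OrderDual.toDual (powMonoidHom n).range) := by
      rw [MulChar.mem_subgroupOrderIsoSubgroupMulChar_symm_iff]
      exact (Set.forall_mem_range (p := fun χ : MulChar M R ↦ χ u = 1)).symm

theorem exists_mulChar_eq_pow_iff [Finite M] [Nontrivial R]
    [HasEnoughRootsOfUnity R (Monoid.exponent Mˣ)] {χ : MulChar M R} {n : ℕ} :
    (∃ ν : MulChar M R, χ = ν ^ n) ↔ ∀ u : Mˣ, u ^ n = 1 → χ u = 1 := by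
  have mem_range_iff : χ ∈ (powMonoidHom n).range ↔
      ∀ u ∈ (powMonoidHom n : Mˣ →* Mˣ).ker, χ u = 1 := by
    rw [← MulChar.mem_subgroupOrderIsoSubgroupMulChar_iff,
      subgroupOrderIsoSubgroupMulChar_ker_powMonoidHom, OrderDual.ofDual_toDual]
  simpa [eq_comm] using mem_range_iff

theorem sum_mulChar_mul_eq_zero_of_apply_ne_one [Fintype M] [NoZeroDivisors R] {χ : MulChar M R}
    {u : Mˣ} (hu : χ u ≠ 1) {f : M → R} (hf : ∀ x, f (u * x) = f x) :
    ∑ x, χ x * f x = 0 := by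
  have sum_eq_mul_sum : ∑ x, χ x * f x = χ u * ∑ x, χ x * f x :=
    calc ∑ x, χ x * f x = ∑ x, χ (u * x) * f (u * x) :=
          (Equiv.sum_comp u.mulLeft fun x ↦ χ x * f x).symm
      _ = χ u * ∑ x, χ x * f x := by simp only [map_mul, hf, mul_assoc, mul_sum]
  have : (χ u - 1) * ∑ x, χ x * f x = 0 := by linear_combination -sum_eq_mul_sum
  exact (mul_eq_zero.1 this).resolve_left (sub_ne_zero.2 hu)

theorem sum_mulChar_mul_comp_pow_eq_zero [Fintype M] [IsDomain R]
    [HasEnoughRootsOfUnity R (Monoid.exponent Mˣ)] {χ : MulChar M R} {n : ℕ}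
    (hχ : ∀ ν : MulChar M R, χ ≠ ν ^ n) (f : M → R) :
    ∑ x, χ x * f (x ^ n) = 0 := by
  obtain ⟨u, hu, hχu⟩ : ∃ u : Mˣ, u ^ n = 1 ∧ χ u ≠ 1 := by
    simpa using exists_mulChar_eq_pow_iff.not.1 (not_exists.2 hχ)
  refine sum_mulChar_mul_eq_zero_of_apply_ne_one hχu fun x ↦ ?_
  rw [mul_pow, ← Units.val_pow_eq_pow_val, hu, Units.val_one, one_mul]

end MulCharPow

theorem Smel_eq_sum_univ {F : Type} [Field F] [Fintype F] [DecidableEq F]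
    (ψ : AddChar F ℂ) (A : MulChar F ℂ) (a : F) (τ : ℂ) (χ : MulChar F ℂ) :
    Smel ψ A a τ χ = ∑ j, χ j * (τ⁻¹ * ∑ x with x ≠ 0, A x * ψ (x + a * j ^ 4 / x)) := by
  rw [Smel, sum_filter]
  refine sum_congr rfl fun j _ ↦ ?_
  obtain rfl | hj := eq_or_ne j 0
  · rw [if_neg (not_not.2 rfl), MulChar.map_zero, zero_mul]
  · rw [if_pos hj, Vkatz, if_neg hj]

theorem S_eq_zero_of_not_fourth_power_general {F : Type} [Field F] [Fintype F] [DecidableEq F]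
    (ψ : AddChar F ℂ) (A : MulChar F ℂ) (a : F) (τ : ℂ) {χ : MulChar F ℂ}
    (hχ : ∀ ν : MulChar F ℂ, χ ≠ ν ^ 4) :
    Smel ψ A a τ χ = 0 := by
  rw [Smel_eq_sum_univ]
  exact sum_mulChar_mul_comp_pow_eq_zero hχ
    fun t ↦ τ⁻¹ * ∑ x with x ≠ 0, A x * ψ (x + a * t / x)

/-- If `χ` is not a fourth power, then `S(χ) = 0`. -/
theorem S_eq_zero_of_not_fourth_power
    (F : Type) [Field F] [Fintype F] [DecidableEq F]
    (hq : Fintype.card F % 4 = 1)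
    (ψ : AddChar F ℂ) (hψ : ψ ≠ 1)
    (A₄ : MulChar F ℂ) (hA₄ : orderOf A₄ = 4)
    (a : F) (ha : a ≠ 0)
    (τ : ℂ) (hτ : τ ^ 2 = (Fintype.card F : ℂ) * A₄ (-a))
    (χ : MulChar F ℂ) (hχ : ∀ ν : MulChar F ℂ, χ ≠ ν ^ 4) :
    Smel ψ A₄ a τ χ = 0 :=
  S_eq_zero_of_not_fourth_power_general ψ A₄ a τ hχ
end

section
/- If the multiplicative character χ of F_q is not a fourth power (i.e., there is no multiplicative character ν with χ = ν⁴), then T(χ) = 0. -/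
/-!
By duality for finite abelian groups, a character `χ` that is not a fourth power is nontrivial at
some `i` with `i ^ 4 = 1`. The value `P(j, 0)` depends on `j` only through `j ^ 2` up to sign: the
substitution `x ↦ -x` absorbs the sign, because `φ(-1) = 1`. Hence `P(i * j, 0) = P(j, 0)`, and
replacing `j` by `i * j` in the Mellin transform gives `T(χ) = χ(i) * T(χ)`, so `T(χ) = 0`.
-/

open Finset

section MulChar

variable {M R : Type*} [CommMonoid M] [CommRing R]

theorem mulChar_mem_iff_forall_apply_eq_one [Finite M]
    [HasEnoughRootsOfUnity R (Monoid.exponent Mˣ)] {X : Subgroup (MulChar M R)} {χ : MulChar M R} :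
    χ ∈ X ↔ ∀ u : Mˣ, (∀ ν ∈ X, ν u = 1) → χ u = 1 := by
  have biduality := (MulChar.subgroupOrderIsoSubgroupMulChar M R).apply_symm_apply (.toDual X)
  calc χ ∈ X ↔ χ ∈ (MulChar.subgroupOrderIsoSubgroupMulChar M R
        ((MulChar.subgroupOrderIsoSubgroupMulChar M R).symm (.toDual X))).ofDual := by
        rw [biduality, OrderDual.ofDual_toDual]
    _ ↔ ∀ u : Mˣ, (∀ ν ∈ X, ν u = 1) → χ u = 1 := by
        simp only [MulChar.mem_subgroupOrderIsoSubgroupMulChar_iff,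
          MulChar.mem_subgroupOrderIsoSubgroupMulChar_symm_iff]

theorem exists_mulChar_pow_eq_iff [Finite M]
    [HasEnoughRootsOfUnity R (Monoid.exponent Mˣ)] {χ : MulChar M R} {n : ℕ} :
    (∃ ν : MulChar M R, ν ^ n = χ) ↔ ∀ u : Mˣ, u ^ n = 1 → χ u = 1 := by
  have mem_powers : (∃ ν : MulChar M R, ν ^ n = χ) ↔
      χ ∈ (powMonoidHom n : MulChar M R →* MulChar M R).range := Iff.rfl
  have annihilator (u : Mˣ) : (∀ ν : MulChar M R, (ν ^ n) u = 1) ↔ u ^ n = 1 := by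
    simp only [MulChar.pow_apply_coe, ← map_pow, ← Units.val_pow_eq_pow_val]
    refine ⟨fun h ↦ ?_, fun h ν ↦ by rw [h, Units.val_one, map_one]⟩
    by_contra hu
    obtain ⟨ν, hν⟩ := (MulChar.exists_apply_ne_one_iff_exists_monoidHom (u ^ n)).mpr
      (CommGroup.exists_apply_ne_one_of_hasEnoughRootsOfUnity Mˣ R hu)
    exact hν (h ν)
  rw [mem_powers, mulChar_mem_iff_forall_apply_eq_one]
  simp only [MonoidHom.mem_range, forall_exists_index, forall_apply_eq_imp_iff,
    powMonoidHom_apply, annihilator]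

theorem sum_mulChar_mul_eq_zero [Fintype M] [NoZeroDivisors R] {χ : MulChar M R} {f : M → R}
    {u : Mˣ} (hχ : χ u ≠ 1) (hf : ∀ x, f (u * x) = f x) : ∑ x, χ x * f x = 0 := by
  refine eq_zero_of_mul_eq_self_left hχ ?_
  calc χ u * ∑ x, χ x * f x = ∑ x, χ (u * x) * f (u * x) := by
        simp only [mul_sum, map_mul, hf, mul_assoc]
    _ = ∑ x, χ x * f x := Equiv.sum_comp u.mulLeft fun x ↦ χ x * f x

theorem mulChar_sq_apply_neg_one [HasDistribNeg M] (χ : MulChar M R) : (χ ^ 2) (-1) = 1 := by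
  rw [χ.pow_apply' two_ne_zero, ← map_pow, neg_one_sq, map_one]

end MulChar

section TwistedKloostermanSum

variable {F R : Type*} [Field F] [Fintype F] [DecidableEq F] [CommRing R]

/-- The Kloosterman sum `∑ ψ(t(x + a/x))` over `x ≠ 0`, twisted by the factor `φ(a/x - x)`;
up to normalization and a delta term, `P(j,0)` is its value at `t = j²`. -/
def twistedKloostermanSum (φ : MulChar F R) (ψ : AddChar F R) (a t : F) : R :=
  ∑ x ∈ univ.filter (fun x : F => x ≠ 0), φ (a / x - x) * ψ (t * (x + a / x))

theorem twistedKloostermanSum_neg {φ : MulChar F R} (hφ : φ (-1) = 1) (ψ : AddChar F R)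
    (a t : F) :
    twistedKloostermanSum φ ψ a (-t) = twistedKloostermanSum φ ψ a t := by
  refine sum_equiv (Equiv.neg F) (by simp) fun x _ ↦ ?_
  have arg_φ : a / -x - -x = -1 * (a / x - x) := by rw [div_neg]; ring
  have arg_ψ : t * (-x + a / -x) = -t * (x + a / x) := by rw [div_neg]; ring
  rw [Equiv.neg_apply, arg_φ, arg_ψ, map_mul φ, hφ, one_mul]

end TwistedKloostermanSum

section Katz

variable {F : Type} [Field F] [Fintype F] [DecidableEq F]
variable (ψ : AddChar F ℂ) (A₄ : MulChar F ℂ) (a : F)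

theorem Pkatz_zero_right (j : F) :
    Pkatz ψ A₄ a j 0 = (if j = 0 then 2 else 0) +
      (gaussSum (A₄ ^ 2) ψ)⁻¹ * twistedKloostermanSum (A₄ ^ 2) ψ a (j ^ 2) := by
  have delta : (if j = 0 then 1 else 0) + (A₄ ^ 2) (-1) * (if j = -0 then 1 else 0) =
      if j = 0 then (2 : ℂ) else 0 := by
    rw [mulChar_sq_apply_neg_one, neg_zero]
    split_ifs <;> norm_num
  have arg_ψ (x : F) : x * (j + 0) ^ 2 + a / x * (j - 0) ^ 2 = j ^ 2 * (x + a / x) := by ring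
  simp only [Pkatz, twistedKloostermanSum, delta, arg_ψ]

theorem Pkatz_mul_zero_right {i : F} (hi : i ^ 4 = 1) (j : F) :
    Pkatz ψ A₄ a (i * j) 0 = Pkatz ψ A₄ a j 0 := by
  have hi₀ : i ≠ 0 := by
    rintro rfl
    norm_num at hi
  have hi_sq : i ^ 2 = 1 ∨ i ^ 2 = -1 := sq_eq_one_iff.mp (by rw [← pow_mul, hi])
  have kloosterman : twistedKloostermanSum (A₄ ^ 2) ψ a ((i * j) ^ 2) =
      twistedKloostermanSum (A₄ ^ 2) ψ a (j ^ 2) := by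
    obtain h | h := hi_sq
    · rw [mul_pow, h, one_mul]
    · rw [mul_pow, h, neg_one_mul, twistedKloostermanSum_neg (mulChar_sq_apply_neg_one A₄)]
  simp only [Pkatz_zero_right, kloosterman, mul_eq_zero, hi₀, false_or]

theorem Tmel_eq_sum_univ (χ : MulChar F ℂ) : Tmel ψ A₄ a χ = ∑ j, χ j * Pkatz ψ A₄ a j 0 := by
  refine sum_filter_of_ne fun j _ hj ↦ ?_
  rintro rfl
  exact hj (by rw [χ.map_zero, zero_mul])

theorem Tmel_eq_zero_of_pow_four_eq_one {χ : MulChar F ℂ} {i : Fˣ} (hi : i ^ 4 = 1)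
    (hχ : χ i ≠ 1) : Tmel ψ A₄ a χ = 0 := by
  have hi' : (i : F) ^ 4 = 1 := by rw [← Units.val_pow_eq_pow_val, hi, Units.val_one]
  rw [Tmel_eq_sum_univ]
  exact sum_mulChar_mul_eq_zero hχ (Pkatz_mul_zero_right ψ A₄ a hi')

end Katz

/-- If `χ` is not a fourth power, then `T(χ) = 0`. -/
theorem T_eq_zero_of_not_fourth_power
    (F : Type) [Field F] [Fintype F] [DecidableEq F]
    (hq : Fintype.card F % 4 = 1)
    (ψ : AddChar F ℂ) (hψ : ψ ≠ 1)
    (A₄ : MulChar F ℂ) (hA₄ : orderOf A₄ = 4)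
    (a : F) (ha : a ≠ 0)
    (χ : MulChar F ℂ) (hχ : ∀ ν : MulChar F ℂ, χ ≠ ν ^ 4) :
    Tmel ψ A₄ a χ = 0 := by
  have not_pow : ¬∃ ν : MulChar F ℂ, ν ^ 4 = χ := fun ⟨ν, hν⟩ ↦ hχ ν hν.symm
  rw [exists_mulChar_pow_eq_iff] at not_pow
  push Not at not_pow
  obtain ⟨i, hi, hχi⟩ := not_pow
  exact Tmel_eq_zero_of_pow_four_eq_one ψ A₄ a hi hχi
end

section
/- If ν is a multiplicative character of F_q and χ = ν⁴, then T(χ) = q^{−1}·A₄(−1)·( A̅₄(a)G(A₄) + G(A̅₄) ) · ν̄(a) · Σ_{m=0}^{3} A₄^{1−m}(a) · G(νA₄^{m}) · G(νA₄^{m−1}), where character powers A₄^{n} for negative n are interpreted via A₄^{−1} = A̅₄. -/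
/-!
Write `K_χ(a, b) = ∑ χ(x) ψ(a x + b / x)` and `φ = A₄²`. For `j ≠ 0` the delta terms of `P(j, 0)`
vanish, and `x ↦ x / j²` turns it into `G(φ)⁻¹ ∑ φ(c / x - x) ψ(x + c / x)` with `c = a j⁴`.
Opening `φ(c / x - x)` as a Gauss sum gives `G(φ)⁻² ∑_w φ(w) K_1(1 - w, (1 + w) c)`, and moving the
factor `1 + w` to the other parameter leaves `G(φ)⁻² ∑_w A₄(w²) K_1(1 - w², c)`. Counting square
roots by `1 + φ` turns this into a sum over `y` of `(A₄(y) + A̅₄(y)) K_1(1 - y, c)`. Summing a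
Kloosterman sum over one parameter against a character gives a Gauss sum times a twisted Kloosterman
sum, and those for `A₄` and `A̅₄` are proportional under `x ↦ c / x`. Hence `P(j, 0)` is a constant
multiple of `K_{A₄}(1, a j⁴)`.

Counting fourth roots by the powers of `A₄`, the Mellin transform at `ν⁴` becomes the sum over `m`
of those of `K_{A₄}(1, a u)` at `ν A₄^m`, each of which is a product of two Gauss sums.
-/

open Finset

theorem orderOf_mulChar_dvd_card_units {M R : Type*} [CommMonoid M] [Finite Mˣ]
    [CommMonoidWithZero R] (χ : MulChar M R) : orderOf χ ∣ Nat.card Mˣ := by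
  cases nonempty_fintype Mˣ
  rw [Nat.card_eq_fintype_card]
  exact orderOf_dvd_of_pow_eq_one χ.pow_card_eq_one

theorem exists_pow_orderOf_eq_of_mulChar_eq_one {M R : Type*} [CommMonoid M] [IsCyclic Mˣ]
    [Finite Mˣ] [CommMonoidWithZero R] {χ : MulChar M R} {u : Mˣ} (hu : χ u = 1) :
    ∃ v : Mˣ, v ^ orderOf χ = u := by
  obtain ⟨g, hg⟩ := IsCyclic.exists_monoid_generator (α := Mˣ)
  obtain ⟨k, rfl⟩ := Submonoid.mem_powers_iff _ _ |>.1 (hg u)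
  have hχk : χ ^ k = 1 := by
    refine MulChar.ext fun v ↦ ?_
    obtain ⟨l, rfl⟩ := Submonoid.mem_powers_iff _ _ |>.1 (hg v)
    rw [Units.val_pow_eq_pow_val, map_pow] at hu
    rw [MulChar.pow_apply_coe, MulChar.one_apply_coe, Units.val_pow_eq_pow_val, map_pow,
      pow_right_comm, hu, one_pow]
  obtain ⟨d, rfl⟩ := orderOf_dvd_of_pow_eq_one hχk
  exact ⟨g ^ d, (pow_mul' g _ d).symm⟩

section PowerMap

variable {M R : Type*} [CommMonoid M] [Fintype Mˣ] [IsCyclic Mˣ] [CommRing R] [IsDomain R]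

theorem card_pow_orderOf_eq [DecidableEq Mˣ] (χ : MulChar M R) (u : Mˣ) :
    (#{v : Mˣ | v ^ orderOf χ = u} : R) = ∑ k ∈ range (orderOf χ), (χ ^ k) u := by
  simp only [MulChar.pow_apply_coe]
  by_cases hu : χ u = 1
  · obtain ⟨v, hv⟩ := exists_pow_orderOf_eq_of_mulChar_eq_one hu
    have hfiber : #{v : Mˣ | v ^ orderOf χ = u} = #{v : Mˣ | v ^ orderOf χ = 1} :=
      MonoidHom.card_fiber_eq_of_mem_range (powMonoidHom (orderOf χ)) ⟨v, hv⟩ ⟨1, map_one _⟩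
    have hker : #{v : Mˣ | v ^ orderOf χ = 1} = orderOf χ := by
      rw [← Fintype.card_subtype, ← Nat.card_eq_fintype_card]
      exact (IsCyclic.card_powMonoidHom_ker Mˣ (orderOf χ)).trans
        (Nat.gcd_eq_right (orderOf_mulChar_dvd_card_units χ))
    simp [hfiber, hker, hu]
  · have hpow (v : Mˣ) : χ v ^ orderOf χ = 1 := by
      rw [← MulChar.pow_apply_coe, pow_orderOf_eq_one, MulChar.one_apply_coe]
    have hempty (v : Mˣ) : v ^ orderOf χ ≠ u := by
      rintro rfl
      exact hu (by rw [Units.val_pow_eq_pow_val, map_pow, hpow])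
    have hgeom : (∑ k ∈ range (orderOf χ), χ u ^ k) * (χ u - 1) = 0 := by
      rw [geom_sum_mul, hpow, sub_self]
    rw [(mul_eq_zero.1 hgeom).resolve_right (sub_ne_zero.2 hu)]
    simp [hempty]

theorem sum_comp_pow_orderOf (χ : MulChar M R) (f : Mˣ → R) :
    ∑ v, f (v ^ orderOf χ) = ∑ u : Mˣ, ∑ k ∈ range (orderOf χ), (χ ^ k) u * f u := by
  classical
  rw [← sum_fiberwise (s := univ) (g := fun v : Mˣ ↦ v ^ orderOf χ)]
  refine sum_congr rfl fun u _ ↦ ?_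
  rw [sum_congr rfl fun v hv ↦ congrArg f (mem_filter.1 hv).2, sum_const, nsmul_eq_mul,
    card_pow_orderOf_eq, sum_mul]

end PowerMap

theorem sum_filter_ne_zero_eq_sum_units {F R : Type*} [GroupWithZero F] [Fintype F] [DecidableEq F]
    [AddCommMonoid R] (f : F → R) : ∑ x with x ≠ 0, f x = ∑ u : Fˣ, f u := by
  rw [← sum_subtype_eq_sum_filter, subtype_univ]
  exact (Fintype.sum_equiv unitsEquivNeZero _ _ fun _ ↦ rfl).symm

section Kloosterman

variable {F R : Type*} [Field F] [Fintype F] [DecidableEq F] [CommRing R]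

theorem sum_mulChar_mul (χ : MulChar F R) (f : F → R) :
    ∑ x, χ x * f x = ∑ u : Fˣ, χ u * f u := by
  rw [← sum_filter_ne_zero_eq_sum_units fun x ↦ χ x * f x, sum_filter_of_ne]
  rintro x - hx rfl
  simp [MulChar.map_zero] at hx

theorem sum_mulChar_mul_addChar (χ : MulChar F R) (ψ : AddChar F R) (t : Fˣ) :
    ∑ u : Fˣ, χ u * ψ (t * u) = χ⁻¹ t * gaussSum χ ψ := by
  rw [← gaussSum_mulShift_eq, gaussSum, sum_mulChar_mul]
  rfl

theorem sum_mulChar_mul_addChar_of_ne_one [IsDomain R] {χ : MulChar F R} (hχ : χ ≠ 1)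
    (ψ : AddChar F R) (t : F) :
    ∑ u : Fˣ, χ u * ψ (t * u) = χ⁻¹ t * gaussSum χ ψ := by
  rcases eq_or_ne t 0 with rfl | ht
  · rw [← sum_mulChar_mul χ fun x ↦ ψ (0 * x)]
    simp [MulChar.sum_eq_zero_of_ne_one hχ, MulChar.map_zero]
  · exact sum_mulChar_mul_addChar χ ψ (Units.mk0 t ht)

/-- The Kloosterman sum `K_χ(a, b) = ∑ χ(x) ψ(a x + b / x)` twisted by `χ`, with `x` running over
the units of `F`. The parameters may vanish: `K_χ(1, 0)` is a Gauss sum. -/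
def twistedKloosterman (ψ : AddChar F R) (χ : MulChar F R) (a b : F) : R :=
  ∑ x : Fˣ, χ x * ψ (a * x + b / x)

variable (ψ : AddChar F R) (χ μ : MulChar F R)

theorem twistedKloosterman_one_zero : twistedKloosterman ψ χ 1 0 = gaussSum χ ψ := by
  simp only [twistedKloosterman, one_mul, zero_div, add_zero]
  exact (sum_mulChar_mul χ ψ).symm

theorem twistedKloosterman_inv (a b : F) :
    twistedKloosterman ψ χ⁻¹ a b = twistedKloosterman ψ χ b a := by
  refine Fintype.sum_equiv (Equiv.inv Fˣ) _ _ fun x ↦ ?_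
  rw [Equiv.inv_apply, MulChar.inv_apply', Units.val_inv_eq_inv_val, div_inv_eq_mul,
    ← div_eq_mul_inv, add_comm]

theorem twistedKloosterman_mul_left (r : Fˣ) (a b : F) :
    twistedKloosterman ψ χ (r * a) b = χ⁻¹ r * twistedKloosterman ψ χ a (r * b) := by
  have hr : χ⁻¹ r * χ r = 1 := by
    rw [← MulChar.mul_apply, inv_mul_cancel, MulChar.one_apply_coe]
  rw [twistedKloosterman, twistedKloosterman, mul_sum]
  refine Fintype.sum_equiv (Equiv.mulLeft r) _ _ fun x ↦ ?_
  rw [Equiv.coe_mulLeft, Units.val_mul, map_mul, ← mul_assoc, ← mul_assoc, hr, one_mul,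
    mul_div_mul_left _ _ r.ne_zero, mul_left_comm, mul_assoc]

theorem kloosterman_comm (a b : F) : twistedKloosterman ψ 1 a b = twistedKloosterman ψ 1 b a := by
  simpa using twistedKloosterman_inv ψ 1 a b

theorem kloosterman_mul_left {r : F} (hr : r ≠ 0) (a b : F) :
    twistedKloosterman ψ 1 (r * a) b = twistedKloosterman ψ 1 a (r * b) := by
  simpa [MulChar.one_apply hr.isUnit] using twistedKloosterman_mul_left ψ 1 (Units.mk0 r hr) a b

theorem kloosterman_zero_left {a b : F} (ha : a ≠ 0) (hb : b ≠ 0) :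
    twistedKloosterman ψ 1 0 b = twistedKloosterman ψ 1 a 0 := by
  have h {t : F} (ht : t ≠ 0) : twistedKloosterman ψ 1 t 0 = twistedKloosterman ψ 1 1 0 := by
    simpa using kloosterman_mul_left ψ ht 1 0
  rw [kloosterman_comm, h hb, h ha]

theorem kloosterman_one_sub_one_add (h2 : (2 : F) ≠ 0) {c : F} (hc : c ≠ 0) (w : F) :
    twistedKloosterman ψ 1 (1 - w) ((1 + w) * c) = twistedKloosterman ψ 1 (1 - w ^ 2) c := by
  rcases eq_or_ne (1 + w) 0 with hw | hw
  · obtain rfl : w = -1 := (neg_eq_of_add_eq_zero_right hw).symm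
    have hleft : (1 : F) - -1 ≠ 0 := by rwa [sub_neg_eq_add, one_add_one_eq_two]
    simpa using (kloosterman_zero_left ψ hleft hc).symm
  · rw [← kloosterman_mul_left ψ hw, ← sq_sub_sq, one_pow]

theorem sum_mulChar_mul_twistedKloosterman (s b : F) (t : Fˣ) :
    ∑ u : Fˣ, μ u * twistedKloosterman ψ χ (s + t * u) b =
      μ⁻¹ t * gaussSum μ ψ * twistedKloosterman ψ (χ * μ⁻¹) s b := by
  simp only [twistedKloosterman, mul_sum]
  rw [sum_comm]
  refine sum_congr rfl fun x _ ↦ ?_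
  calc ∑ u : Fˣ, μ u * (χ x * ψ ((s + t * u) * x + b / x))
      = χ x * ψ (s * x + b / x) * ∑ u : Fˣ, μ u * ψ ((t * x : Fˣ) * u) := by
        rw [mul_sum]
        refine sum_congr rfl fun u _ ↦ ?_
        have hsplit : (s + t * u) * x + b / x = s * x + b / x + (t * x : Fˣ) * u := by
          push_cast
          ring
        rw [hsplit, AddChar.map_add_eq_mul]
        ring
    _ = μ⁻¹ t * gaussSum μ ψ * ((χ * μ⁻¹) x * ψ (s * x + b / x)) := by
        rw [sum_mulChar_mul_addChar, Units.val_mul, map_mul, MulChar.mul_apply]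
        ring

theorem mellin_twistedKloosterman (a : Fˣ) :
    ∑ u : Fˣ, μ u * twistedKloosterman ψ χ 1 (a * u) =
      μ⁻¹ a * (gaussSum μ ψ * gaussSum (μ * χ) ψ) := by
  have h := sum_mulChar_mul_twistedKloosterman ψ χ⁻¹ μ 0 1 a
  simp only [zero_add, twistedKloosterman_inv] at h
  rw [h, ← mul_inv, twistedKloosterman_inv, twistedKloosterman_one_zero, mul_comm χ μ, mul_assoc]

theorem mellin_twistedKloosterman_comp_pow [IsDomain R] (a : Fˣ) :
    ∑ j : Fˣ, (μ ^ orderOf χ) j * twistedKloosterman ψ χ 1 (a * j ^ orderOf χ) =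
      μ⁻¹ a * ∑ m ∈ range (orderOf χ), (χ ^ (1 - (m : ℤ))) a *
        gaussSum (μ * χ ^ (m : ℤ)) ψ * gaussSum (μ * χ ^ ((m : ℤ) - 1)) ψ := by
  let term (m : ℕ) : R := (χ ^ (1 - (m : ℤ))) a *
    gaussSum (μ * χ ^ (m : ℤ)) ψ * gaussSum (μ * χ ^ ((m : ℤ) - 1)) ψ
  have hperiod : term (orderOf χ) = term 0 := by
    simp [term, zpow_sub, pow_orderOf_eq_one]
  have hshift : ∑ m ∈ range (orderOf χ), term (m + 1) = ∑ m ∈ range (orderOf χ), term m := by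
    refine add_right_cancel (b := term 0) ?_
    rw [← sum_range_succ', sum_range_succ, hperiod]
  have hterm (m : ℕ) :
      ∑ u : Fˣ, (μ * χ ^ m) u * twistedKloosterman ψ χ 1 (a * u) = μ⁻¹ a * term (m + 1) := by
    have hexp : (1 : ℤ) - ↑(m + 1) = -m := by push_cast; ring
    have hpred : ((m + 1 : ℕ) : ℤ) - 1 = m := by push_cast; ring
    rw [mellin_twistedKloosterman, mul_inv, MulChar.mul_apply, mul_assoc μ, ← pow_succ]
    simp only [term, hexp, hpred, zpow_neg, zpow_natCast]
    ring
  calc ∑ j : Fˣ, (μ ^ orderOf χ) j * twistedKloosterman ψ χ 1 (a * j ^ orderOf χ)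
      = ∑ j : Fˣ, μ (j ^ orderOf χ : Fˣ) *
          twistedKloosterman ψ χ 1 (a * (j ^ orderOf χ : Fˣ)) := by
        simp only [MulChar.pow_apply_coe, Units.val_pow_eq_pow_val, map_pow]
    _ = ∑ m ∈ range (orderOf χ),
          ∑ u : Fˣ, (μ * χ ^ m) u * twistedKloosterman ψ χ 1 (a * u) := by
        rw [sum_comp_pow_orderOf χ fun u : Fˣ ↦ μ u * twistedKloosterman ψ χ 1 (a * u), sum_comm]
        simp only [MulChar.mul_apply, mul_left_comm, mul_assoc]
    _ = μ⁻¹ a * ∑ m ∈ range (orderOf χ), term m := by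
        simp only [hterm, ← mul_sum, hshift]

end Kloosterman

theorem two_ne_zero_of_orderOf_mulChar_eq_two {F R : Type*} [Field F] [Finite F] [CommRing R]
    {φ : MulChar F R} (hφ : orderOf φ = 2) : (2 : F) ≠ 0 := by
  cases nonempty_fintype F
  refine Ring.two_ne_zero fun hchar ↦ ?_
  have heven := FiniteField.even_card_of_char_two hchar
  have hdvd := hφ ▸ φ.orderOf_dvd_card_sub_one
  have hcard := Fintype.one_lt_card (α := F)
  omega

section Quadratic

variable {F R : Type*} [Field F] [Fintype F] [DecidableEq F] [CommRing R] [IsDomain R]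

theorem gaussSum_mul_sum_eq_sum_kloosterman (ψ : AddChar F R) {χ : MulChar F R} (hχ : χ ≠ 1)
    (c : F) :
    gaussSum χ ψ * ∑ x : Fˣ, χ⁻¹ (c / x - x) * ψ (x + c / x) =
      ∑ w : Fˣ, χ w * twistedKloosterman ψ 1 (1 - w) ((1 + w) * c) := by
  simp only [twistedKloosterman, mul_sum, MulChar.one_apply_coe, one_mul]
  rw [sum_comm]
  refine sum_congr rfl fun x _ ↦ ?_
  rw [← mul_assoc, mul_comm (gaussSum _ _), ← sum_mulChar_mul_addChar_of_ne_one hχ, sum_mul]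
  refine sum_congr rfl fun w _ ↦ ?_
  rw [mul_assoc, ← AddChar.map_add_eq_mul]
  ring_nf

theorem gaussSum_sq_mul_sum_eq (ψ : AddChar F R) {χ φ : MulChar F R} (hχ : χ ^ 2 ≠ 1)
    (hφ : orderOf φ = 2) (c : Fˣ) :
    gaussSum (χ ^ 2) ψ * ∑ x : Fˣ, (χ ^ 2)⁻¹ (c / x - x) * ψ (x + c / x) =
      χ (-1) * gaussSum χ ψ * twistedKloosterman ψ χ⁻¹ 1 c +
        (χ * φ) (-1) * gaussSum (χ * φ) ψ * twistedKloosterman ψ (χ * φ)⁻¹ 1 c := by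
  have h2 := two_ne_zero_of_orderOf_mulChar_eq_two hφ
  have hgauss (μ : MulChar F R) :
      ∑ y : Fˣ, μ y * twistedKloosterman ψ 1 (1 - y) c =
        μ (-1) * gaussSum μ ψ * twistedKloosterman ψ μ⁻¹ 1 c := by
    simpa [sub_eq_add_neg, MulChar.inv_apply'] using
      sum_mulChar_mul_twistedKloosterman ψ 1 μ 1 c (-1)
  calc gaussSum (χ ^ 2) ψ * ∑ x : Fˣ, (χ ^ 2)⁻¹ (c / x - x) * ψ (x + c / x)
      = ∑ w : Fˣ, χ (w ^ 2 : Fˣ) * twistedKloosterman ψ 1 (1 - (w ^ 2 : Fˣ)) c := by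
        simp only [gaussSum_mul_sum_eq_sum_kloosterman ψ hχ,
          kloosterman_one_sub_one_add ψ h2 c.ne_zero, MulChar.pow_apply_coe,
          Units.val_pow_eq_pow_val, map_pow]
    _ = ∑ y : Fˣ, (χ y * twistedKloosterman ψ 1 (1 - y) c +
          (χ * φ) y * twistedKloosterman ψ 1 (1 - y) c) := by
        have h := sum_comp_pow_orderOf φ
          fun y : Fˣ ↦ χ y * twistedKloosterman ψ 1 (1 - y) c
        rw [hφ] at h
        rw [h]
        refine sum_congr rfl fun y _ ↦ ?_
        rw [sum_range_succ, sum_range_one, pow_zero, pow_one, MulChar.one_apply_coe,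
          MulChar.mul_apply]
        ring
    _ = _ := by rw [sum_add_distrib, hgauss, hgauss]

theorem gaussSum_sq_mul_sum_eq_of_orderOf_eq_four (ψ : AddChar F R) {χ : MulChar F R}
    (hχ : orderOf χ = 4) (c : Fˣ) :
    gaussSum (χ ^ 2) ψ * ∑ x : Fˣ, (χ ^ 2) (c / x - x) * ψ (x + c / x) =
      χ (-1) * (χ⁻¹ c * gaussSum χ ψ + gaussSum χ⁻¹ ψ) * twistedKloosterman ψ χ 1 c := by
  have hχ4 : χ ^ 4 = 1 := hχ ▸ pow_orderOf_eq_one χ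
  have hφ : orderOf (χ ^ 2) = 2 := by simp [orderOf_pow, hχ]
  have hφ1 : χ ^ 2 ≠ 1 := (orderOf_eq_prime_iff.1 hφ).2
  have hφinv : (χ ^ 2)⁻¹ = χ ^ 2 := inv_eq_of_mul_eq_one_left (by rw [← pow_add, hχ4])
  have hχinv : χ * χ ^ 2 = χ⁻¹ := eq_inv_of_mul_eq_one_left (by rw [← pow_succ', ← pow_succ, hχ4])
  have hinv : twistedKloosterman ψ χ⁻¹ 1 c = χ⁻¹ c * twistedKloosterman ψ χ 1 c := by
    simpa only [mul_one, twistedKloosterman_inv] using twistedKloosterman_mul_left ψ χ c 1 1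
  have hneg : χ⁻¹ (-1) = χ (-1) := by rw [MulChar.inv_apply', inv_neg_one]
  have h := gaussSum_sq_mul_sum_eq ψ hφ1 hφ c
  rw [hφinv, hχinv, inv_inv, hinv, hneg] at h
  rw [h]
  ring

end Quadratic

section Katz

variable {F : Type} [Field F] [Fintype F] [DecidableEq F]

theorem Pkatz_zero_right_s5 (ψ : AddChar F ℂ) {χ : MulChar F ℂ} (hχ : χ ^ 4 = 1) (a j : Fˣ) :
    Pkatz ψ χ a j 0 = (gaussSum (χ ^ 2) ψ)⁻¹ *
      ∑ x : Fˣ, (χ ^ 2) ((a * j ^ 4 : Fˣ) / x - x) * ψ (x + (a * j ^ 4 : Fˣ) / x) := by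
  have hj := j.ne_zero
  have hφj : (χ ^ 2) ((j : F) ^ 2) = 1 := by
    rw [map_pow, ← MulChar.pow_apply' _ two_ne_zero, ← pow_mul, hχ, MulChar.one_apply_coe]
  rw [Pkatz, sum_filter_ne_zero_eq_sum_units]
  simp only [neg_zero, hj, if_false, mul_zero, add_zero, zero_add, sub_zero]
  congr 1
  refine Fintype.sum_equiv (Equiv.mulLeft (j ^ 2)) _ _ fun x ↦ ?_
  have hx := x.ne_zero
  have hmul : ((a * j ^ 4 : Fˣ) : F) / (j ^ 2 * x : Fˣ) - (j ^ 2 * x : Fˣ) =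
      (j : F) ^ 2 * (a / x - x) := by
    push_cast
    field_simp
  have hadd : ((j ^ 2 * x : Fˣ) : F) + (a * j ^ 4 : Fˣ) / (j ^ 2 * x : Fˣ) =
      x * (j : F) ^ 2 + a / x * (j : F) ^ 2 := by
    push_cast
    field_simp
  rw [Equiv.coe_mulLeft, hmul, hadd, map_mul, hφj, one_mul]

theorem Pkatz_zero_right_eq_twistedKloosterman {ψ : AddChar F ℂ} (hψ : ψ ≠ 1) {χ : MulChar F ℂ}
    (hχ : orderOf χ = 4) (a j : Fˣ) :
    Pkatz ψ χ a j 0 = (Fintype.card F : ℂ)⁻¹ * χ (-1) *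
      (χ⁻¹ a * gaussSum χ ψ + gaussSum χ⁻¹ ψ) * twistedKloosterman ψ χ 1 (a * j ^ 4) := by
  have hχ4 : χ ^ 4 = 1 := hχ ▸ pow_orderOf_eq_one χ
  have hχa : χ⁻¹ (a * j ^ 4 : Fˣ) = χ⁻¹ a := by
    rw [Units.val_mul, map_mul, Units.val_pow_eq_pow_val, map_pow, ← MulChar.pow_apply_coe,
      inv_pow, hχ4, inv_one, MulChar.one_apply_coe, mul_one]
  have hGsq : gaussSum (χ ^ 2) ψ ^ 2 = Fintype.card F := by
    obtain ⟨hφsq, hφ⟩ := orderOf_eq_prime_iff.1 (show orderOf (χ ^ 2) = 2 by simp [orderOf_pow, hχ])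
    rw [gaussSum_sq hφ (MulChar.isQuadratic_iff_sq_eq_one.2 hφsq) (.of_ne_one hψ),
      MulChar.pow_apply' _ two_ne_zero, ← map_pow, neg_one_sq, map_one, one_mul]
  have hG : gaussSum (χ ^ 2) ψ ≠ 0 := by
    rw [← pow_ne_zero_iff two_ne_zero, hGsq]
    exact Nat.cast_ne_zero.2 Fintype.card_ne_zero
  have hmain := gaussSum_sq_mul_sum_eq_of_orderOf_eq_four ψ hχ (a * j ^ 4)
  rw [hχa, Units.val_mul, Units.val_pow_eq_pow_val, ← eq_inv_mul_iff_mul_eq₀ hG] at hmain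
  rw [Pkatz_zero_right_s5 ψ hχ4, Units.val_mul, Units.val_pow_eq_pow_val, hmain, ← hGsq]
  field_simp

end Katz

/-- Evaluation of `T(ν⁴)` in terms of Gauss sums. -/
theorem T_eval_fourth_power
    (F : Type) [Field F] [Fintype F] [DecidableEq F]
    (hq : Fintype.card F % 4 = 1)
    (ψ : AddChar F ℂ) (hψ : ψ ≠ 1)
    (A₄ : MulChar F ℂ) (hA₄ : orderOf A₄ = 4)
    (a : F) (ha : a ≠ 0)
    (ν : MulChar F ℂ) :
    Tmel ψ A₄ a (ν ^ 4) =
      (Fintype.card F : ℂ)⁻¹ * A₄ (-1) *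
        (A₄⁻¹ a * gaussSum A₄ ψ + gaussSum A₄⁻¹ ψ) *
        (ν⁻¹ a * ∑ m ∈ Finset.range 4,
          (A₄ ^ (1 - (m : ℤ))) a * gaussSum (ν * A₄ ^ (m : ℤ)) ψ *
            gaussSum (ν * A₄ ^ ((m : ℤ) - 1)) ψ) := by
  lift a to Fˣ using ha.isUnit
  have hmellin := mellin_twistedKloosterman_comp_pow ψ A₄ ν a
  rw [hA₄] at hmellin
  rw [Tmel, sum_filter_ne_zero_eq_sum_units, ← hmellin, mul_sum]
  refine sum_congr rfl fun j _ ↦ ?_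
  rw [Pkatz_zero_right_eq_twistedKloosterman hψ hA₄, mul_left_comm]
end
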